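/- Let X ∈ ℝ^d have an admissible distribution P^⊗d, let σ be an admissible activation with order of approximation φ_σ, and let f(W*, X) be computed by an L-layer neural network with activation σ whose weights satisfy ‖a*‖_{ℓ1} ≤ 1 and ‖W*_{p,j}‖_{ℓ1} ≤ 1 for every p ∈ [L] and every row j. Fix ε > 0, set M = (φ_σ(√(ε/L²)))^L ∈ ℕ, and let C be the (d,M)-multiplicities set. Then there exist coefficients (q*_α)_{α∈C} ∈ ℝ^{|C|} such that the polynomial P(X) = Σ_{α∈C} q*_α X_α satisfies both (a) E[X_α (f(W*, X) − P(X))] = 0 for every α ∈ C, and (b) E[(f(W*, X) − P(X))²] ≤ ε. -/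

import Mathlib

open MeasureTheory Polynomial Matrix
open scoped Classical

noncomputable section

/-- One layer of a neural network: apply the weight matrix, then the activation
coordinatewise. -/
def applyLayer (σ : ℝ → ℝ) {m n : ℕ} (W : Matrix (Fin m) (Fin n) ℝ) (v : Fin n → ℝ) :
    Fin m → ℝ :=
  fun j => σ (∑ i, W j i * v i)

/-- Iterated application of `n` square hidden layers. -/
def iterLayers (σ : ℝ → ℝ) {m : ℕ} :
    (n : ℕ) → (Fin n → Matrix (Fin m) (Fin m) ℝ) → (Fin m → ℝ) → (Fin m → ℝ)
  | 0, _, v => v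
  | n + 1, W, v => applyLayer σ (W (Fin.last n)) (iterLayers σ n (fun i => W i.castSucc) v)

/-- Output of a neural network of depth `n+1` (one rectangular layer `W1` followed by
`n` square layers `Ws` and output weights `a`):
`f(W,x) = aᵀ σ(W_{n+1} σ( ⋯ σ(W_1 x) ⋯ ))`. -/
def nnFun (σ : ℝ → ℝ) {d m n : ℕ} (a : Fin m → ℝ)
    (W1 : Matrix (Fin m) (Fin d) ℝ) (Ws : Fin n → Matrix (Fin m) (Fin m) ℝ)
    (x : Fin d → ℝ) : ℝ :=
  ∑ j, a j * iterLayers σ n Ws (applyLayer σ W1 x) j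

/-- The monomial `x_α = ∏ i, (x i) ^ (α i)`. -/
def monom {d : ℕ} (α : Fin d → ℕ) (x : Fin d → ℝ) : ℝ := ∏ i, x i ^ α i

/-- Topological support of a measure on `ℝ`. -/
def measSupport (P : Measure ℝ) : Set ℝ := {x | ∀ U ∈ nhds x, P U ≠ 0}

/-- `ω(P,t) = min(|Support(P)| − 1, t)`, equal to `t` when the support is infinite. -/
def omegaP (P : Measure ℝ) (t : ℕ) : ℕ :=
  if (measSupport P).Finite then min ((measSupport P).ncard - 1) t else t

/-- `M' = min(M, d·(|Support(P)| − 1))`, equal to `M` when the support is infinite. -/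
def capM (P : Measure ℝ) (d M : ℕ) : ℕ :=
  if (measSupport P).Finite then min M (d * ((measSupport P).ncard - 1)) else M

/-- `F_{s,t}`: multi-indices `α ∈ ℕ^d` with all entries `≤ s` and total degree `t`. -/
def Fst (d s t : ℕ) : Finset (Fin d → ℕ) :=
  (Fintype.piFinset fun _ : Fin d => Finset.range (s + 1)).filter fun α => ∑ i, α i = t

/-- The `(d,M)`-multiplicities set `C = ∪_{t=0}^{M'} F_{ω(P,M),t}`. -/
def multSet (P : Measure ℝ) (d M : ℕ) : Finset (Fin d → ℕ) :=
  (Fintype.piFinset fun _ : Fin d => Finset.range (omegaP P M + 1)).filter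
    fun α => ∑ i, α i ≤ capM P d M

/-- `n`-th moment `c_n = E[X^n]` of `P`. -/
def momentP (P : Measure ℝ) (n : ℕ) : ℝ := ∫ x, x ^ n ∂P

/-- Hankel determinant `D_n = det((c_{i+j})_{0 ≤ i,j ≤ n})` of moments of `P`. -/
def Dn (P : Measure ℝ) (n : ℕ) : ℝ :=
  Matrix.det (Matrix.of fun i j : Fin (n + 1) => momentP P ((i : ℕ) + (j : ℕ)))

/-- `c(P,k) = min(min_{1 ≤ i ≤ ω(P,k)} (D_i/D_{i−1})^{k/2}, 1)`. -/
def cPk (P : Measure ℝ) (k : ℕ) : ℝ :=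
  sInf (insert (1 : ℝ)
    ((fun i => (Dn P i / Dn P (i - 1)) ^ ((k : ℝ) / 2)) '' Set.Icc 1 (omegaP P k)))

/-- `max(max_{1 ≤ i ≤ ω(P,k)} (D_i/D_{i−1})^{k/2}, 1)`. -/
def cPkMax (P : Measure ℝ) (k : ℕ) : ℝ :=
  sSup (insert (1 : ℝ)
    ((fun i => (Dn P i / Dn P (i - 1)) ^ ((k : ℝ) / 2)) '' Set.Icc 1 (omegaP P k)))

/-- `max(max_{1 ≤ i ≤ ω(P,k)} (D_i/D_{i−1})^k, 1)`. -/
def ratioMaxK (P : Measure ℝ) (k : ℕ) : ℝ :=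
  sSup (insert (1 : ℝ)
    ((fun i => (Dn P i / Dn P (i - 1)) ^ k) '' Set.Icc 1 (omegaP P k)))

/-- `min(min_{1 ≤ i ≤ ω(P,k)} (D_i/D_{i−1})^k, 1)`. -/
def ratioMinK (P : Measure ℝ) (k : ℕ) : ℝ :=
  sInf (insert (1 : ℝ)
    ((fun i => (Dn P i / Dn P (i - 1)) ^ k) '' Set.Icc 1 (omegaP P k)))

/-- `f(P,k) = max(c_{2ω(P,k)}^k, 1) · max(max_i (D_i/D_{i−1})^k, 1) / min(min_i (D_i/D_{i−1})^k, 1)`. -/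
def fPk (P : Measure ℝ) (k : ℕ) : ℝ :=
  max (momentP P (2 * omegaP P k) ^ k) 1 * ratioMaxK P k / ratioMinK P k

/-- `C(P,k) = f(P,k)/c(P,k)`. -/
def CPk (P : Measure ℝ) (k : ℕ) : ℝ := fPk P k / cPk P k

/-- An admissible distribution: a non-constant probability measure supported in `[-1,1]`. -/
def AdmissibleDist (P : Measure ℝ) : Prop :=
  IsProbabilityMeasure P ∧ P (Set.Icc (-1 : ℝ) 1) = 1 ∧ ∀ c : ℝ, P {c} < 1

/-- The product measure `P^{⊗d}` on `ℝ^d`. -/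
def piP (P : Measure ℝ) (d : ℕ) : Measure (Fin d → ℝ) := Measure.pi fun _ => P

/-- The joint law of `N` i.i.d. samples from `P^{⊗d}`. -/
def samples (P : Measure ℝ) (d N : ℕ) : Measure (Fin N → Fin d → ℝ) :=
  Measure.pi fun _ => piP P d

/-- Order of polynomial approximation of `σ` on `[-1,1]`: the least degree `r` for which
some real polynomial of degree `r` is uniformly within `ε` of `σ` on `[-1,1]`. -/
def approxOrder (σ : ℝ → ℝ) (ε : ℝ) : ℕ :=
  sInf {r : ℕ | ∃ p : Polynomial ℝ, p.natDegree = r ∧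
    ∀ x ∈ Set.Icc (-1 : ℝ) 1, |p.eval x - σ x| ≤ ε}

/-- An admissible activation function. -/
def AdmissibleActivation (σ : ℝ → ℝ) : Prop :=
  (∀ ε : ℝ, 0 < ε → ∃ p : Polynomial ℝ,
      ∀ x ∈ Set.Icc (-1 : ℝ) 1, |p.eval x - σ x| ≤ ε) ∧
  (∀ ε : ℝ, 0 < ε → ∃ p : Polynomial ℝ, p.natDegree = approxOrder σ ε ∧
      (∀ x ∈ Set.Icc (-1 : ℝ) 1, |p.eval x - σ x| ≤ ε) ∧
      ∀ x ∈ Set.Icc (-1 : ℝ) 1, p.eval x ∈ Set.Icc (0 : ℝ) 1) ∧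
  LipschitzOnWith 1 σ (Set.Icc (-1) 1) ∧
  ∀ x ∈ Set.Icc (-1 : ℝ) 1, |σ x| ≤ 1

/-- Quadratic form `vᵀ A v`. -/
def quadForm {n : Type*} [Fintype n] (A : Matrix n n ℝ) (v : n → ℝ) : ℝ :=
  ∑ i, ∑ j, v i * A i j * v j

/-- Smallest eigenvalue of a symmetric matrix (Rayleigh characterization). -/
def lamMin {n : Type*} [Fintype n] (A : Matrix n n ℝ) : ℝ :=
  sInf {r : ℝ | ∃ v : n → ℝ, ∑ i, v i ^ 2 = 1 ∧ r = quadForm A v}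

/-- Largest eigenvalue of a symmetric matrix (Rayleigh characterization). -/
def lamMax {n : Type*} [Fintype n] (A : Matrix n n ℝ) : ℝ :=
  sSup {r : ℝ | ∃ v : n → ℝ, ∑ i, v i ^ 2 = 1 ∧ r = quadForm A v}

/-- Smallest singular value. -/
def sigMin {n : Type*} [Fintype n] (A : Matrix n n ℝ) : ℝ :=
  Real.sqrt (lamMin (Aᵀ * A))

/-- Largest singular value. -/
def sigMax {n : Type*} [Fintype n] (A : Matrix n n ℝ) : ℝ :=
  Real.sqrt (lamMax (Aᵀ * A))

/-- The covariance matrix `Σ = E[𝒳 𝒳ᵀ]` of the monomials indexed by the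
`(d,k)`-multiplicities set, for input `X ∼ P^{⊗d}`. -/
def covMat (P : Measure ℝ) (d k : ℕ) :
    Matrix {α // α ∈ multSet P d k} {α // α ∈ multSet P d k} ℝ :=
  Matrix.of fun a b => ∫ x, monom a.1 x * monom b.1 x ∂(piP P d)


lemma l2_proj {Ω ι : Type*} [MeasurableSpace Ω] (μ : Measure Ω) (C : Finset ι)
    (φ : ι → Ω → ℝ) (hφ : ∀ b, MemLp (φ b) 2 μ) (f : Ω → ℝ) (hf : MemLp f 2 μ) :
    ∃ q : ι → ℝ, (∀ α ∈ C, ∫ x, φ α x * (f x - ∑ β ∈ C, q β * φ β x) ∂μ = 0) ∧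
      ∀ c : ι → ℝ, ∫ x, (f x - ∑ β ∈ C, q β * φ β x) ^ 2 ∂μ ≤
        ∫ x, (f x - ∑ β ∈ C, c β * φ β x) ^ 2 ∂μ := by
  have hsum : ∀ (c : ι → ℝ) (D : Finset ι),
      (((∑ β ∈ D, c β • (hφ β).toLp (φ β) : Lp ℝ 2 μ)) : Ω → ℝ) =ᵐ[μ]
        fun x => ∑ β ∈ D, c β * φ β x := by
    intro c D
    induction D using Finset.induction_on with
    | empty =>
      simp only [Finset.sum_empty]
      exact Lp.coeFn_zero _ _ _
    | insert b D hb ih =>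
      simp only [Finset.sum_insert hb]
      filter_upwards [Lp.coeFn_add (c b • (hφ b).toLp (φ b)) (∑ β ∈ D, c β • (hφ β).toLp (φ β)),
        Lp.coeFn_smul (c b) ((hφ b).toLp (φ b)), (hφ b).coeFn_toLp, ih] with x h1 h2 h3 h4
      rw [h1, Pi.add_apply, h2, h4, Pi.smul_apply, h3, smul_eq_mul]
  have hdiff : ∀ c : ι → ℝ,
      ((hf.toLp f - ∑ β ∈ C, c β • (hφ β).toLp (φ β) : Lp ℝ 2 μ) : Ω → ℝ) =ᵐ[μ]
        fun x => f x - ∑ β ∈ C, c β * φ β x := by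
    intro c
    filter_upwards [Lp.coeFn_sub (hf.toLp f) (∑ β ∈ C, c β • (hφ β).toLp (φ β)),
      hf.coeFn_toLp, hsum c C] with x h1 h2 h3
    rw [h1, Pi.sub_apply, h2, h3]
  have hnorm : ∀ c : ι → ℝ, ∫ x, (f x - ∑ β ∈ C, c β * φ β x) ^ 2 ∂μ =
      ‖hf.toLp f - ∑ β ∈ C, c β • (hφ β).toLp (φ β)‖ ^ 2 := by
    intro c
    rw [← real_inner_self_eq_norm_sq, L2.inner_def]
    refine integral_congr_ae ?_
    filter_upwards [hdiff c] with x hx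
    rw [hx]
    simp [sq]
  let S : Submodule ℝ (Lp ℝ 2 μ) :=
    Submodule.span ℝ ((fun β => (hφ β).toLp (φ β)) '' (C : Set ι))
  haveI : FiniteDimensional ℝ S :=
    FiniteDimensional.span_of_finite ℝ (C.finite_toSet.image _)
  have hmem : S.starProjection (hf.toLp f) ∈ S := Submodule.starProjection_apply_mem _ _
  obtain ⟨q, hq⟩ := (Submodule.mem_span_image_finset_iff_exists_fun' ℝ).1 hmem
  refine ⟨q, ?_, ?_⟩
  · intro α hα
    have h := S.starProjection_inner_eq_zero (hf.toLp f) ((hφ α).toLp (φ α))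
      (Submodule.subset_span ⟨α, hα, rfl⟩)
    rw [← hq, L2.inner_def] at h
    rw [← h]
    refine integral_congr_ae ?_
    filter_upwards [hdiff q, (hφ α).coeFn_toLp] with x hx h2
    rw [hx, h2]
    simp
  · intro c
    rw [hnorm, hnorm, hq]
    gcongr
    rw [S.starProjection_minimal]
    have hc : ∑ β ∈ C, c β • (hφ β).toLp (φ β) ∈ S :=
      Submodule.sum_mem _ fun β hβ => S.smul_mem _ (Submodule.subset_span ⟨β, hβ, rfl⟩)
    exact ciInf_le ⟨0, by rintro _ ⟨y, rfl⟩; exact norm_nonneg _⟩ (⟨_, hc⟩ : S)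

/-- polynomials of total degree at most `k`, as functions -/
def polyV (d k : ℕ) : Submodule ℝ ((Fin d → ℝ) → ℝ) :=
  Submodule.span ℝ (monom '' {α : Fin d → ℕ | ∑ i, α i ≤ k})

lemma polyV_mono {d j k : ℕ} (h : j ≤ k) : polyV d j ≤ polyV d k :=
  Submodule.span_mono (Set.image_mono fun _ ha => le_trans ha h)

lemma polyV_mul {d j k : ℕ} {f g : (Fin d → ℝ) → ℝ} (hf : f ∈ polyV d j) (hg : g ∈ polyV d k) :
    f * g ∈ polyV d (j + k) := by
  have h := Submodule.mul_mem_mul hf hg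
  unfold polyV at h
  rw [Submodule.span_mul_span] at h
  refine Submodule.span_mono ?_ h
  rintro _ ⟨_, ⟨α, hα, rfl⟩, _, ⟨β, hβ, rfl⟩, rfl⟩
  refine ⟨α + β, ?_, ?_⟩
  · simp only [Set.mem_ofPred_eq, Pi.add_apply, Finset.sum_add_distrib] at *
    omega
  · funext x
    simp [monom, pow_add, Finset.prod_mul_distrib]

lemma polyV_one {d : ℕ} : (1 : (Fin d → ℝ) → ℝ) ∈ polyV d 0 :=
  Submodule.subset_span ⟨0, by simp, by funext x; simp [monom]⟩

lemma polyV_pow {d k : ℕ} {f : (Fin d → ℝ) → ℝ} (hf : f ∈ polyV d k) (n : ℕ) :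
    f ^ n ∈ polyV d (n * k) := by
  induction n with
  | zero => simpa using polyV_one
  | succ n ih =>
    rw [pow_succ, Nat.succ_mul]
    exact polyV_mul ih hf

lemma polyV_eval {d k : ℕ} {f : (Fin d → ℝ) → ℝ} (hf : f ∈ polyV d k) (p : Polynomial ℝ) :
    (fun x => p.eval (f x)) ∈ polyV d (p.natDegree * k) := by
  have : (fun x => p.eval (f x)) = ∑ i ∈ Finset.range (p.natDegree + 1), p.coeff i • f ^ i := by
    funext x
    simp [Polynomial.eval_eq_sum_range, Finset.sum_apply]
  rw [this]
  refine Submodule.sum_mem _ fun i hi => Submodule.smul_mem _ _ ?_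
  exact polyV_mono (Nat.mul_le_mul_right _ (by simp at hi; omega)) (polyV_pow hf i)

lemma polyV_coord {d : ℕ} (i : Fin d) : (fun x : Fin d → ℝ => x i) ∈ polyV d 1 := by
  refine Submodule.subset_span ⟨Pi.single i 1, by simp, ?_⟩
  funext x
  unfold monom
  rw [Finset.prod_eq_single i]
  · simp
  · intro j _ hj
    simp [hj]
  · simp

def cube (d : ℕ) : Set (Fin d → ℝ) := {x | ∀ i, x i ∈ Set.Icc (-1 : ℝ) 1}

def GoodF (d r : ℕ) (δ : ℝ) (k : ℕ) (u : (Fin d → ℝ) → ℝ) : Prop :=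
  ContinuousOn u (cube d) ∧ (∀ x ∈ cube d, |u x| ≤ 1) ∧
    ∃ g ∈ polyV d (r ^ k), ∀ x ∈ cube d, |g x| ≤ 1 ∧ |g x - u x| ≤ k * δ

lemma abs_lin {n : ℕ} (w v : Fin n → ℝ) (hw : ∑ i, |w i| ≤ 1) (c : ℝ) (hc : 0 ≤ c)
    (hv : ∀ i, |v i| ≤ c) : |∑ i, w i * v i| ≤ c := by
  calc |∑ i, w i * v i| ≤ ∑ i, |w i * v i| := Finset.abs_sum_le_sum_abs _ _
    _ ≤ ∑ i, |w i| * c := by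
      refine Finset.sum_le_sum fun i _ => ?_
      rw [abs_mul]
      exact mul_le_mul_of_nonneg_left (hv i) (abs_nonneg _)
    _ = (∑ i, |w i|) * c := by rw [Finset.sum_mul]
    _ ≤ 1 * c := by gcongr
    _ = c := one_mul c

lemma GoodF.lin {d r k n : ℕ} {δ : ℝ} (hδ : 0 ≤ δ) (u : Fin n → (Fin d → ℝ) → ℝ)
    (hu : ∀ i, GoodF d r δ k (u i)) (w : Fin n → ℝ) (hw : ∑ i, |w i| ≤ 1) :
    GoodF d r δ k (fun x => ∑ i, w i * u i x) := by
  choose h1 h2 g hg h3 using hu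
  refine ⟨?_, ?_, ∑ i, w i • g i, ?_, ?_⟩
  · exact continuousOn_finsetSum _ fun i _ => continuousOn_const.mul (h1 i)
  · intro x hx
    exact abs_lin w _ hw 1 zero_le_one fun i => h2 i x hx
  · exact Submodule.sum_mem _ fun i _ => Submodule.smul_mem _ _ (hg i)
  · intro x hx
    have e : (∑ i, w i • g i) x = ∑ i, w i * g i x := by simp [Finset.sum_apply]
    rw [e]
    refine ⟨abs_lin w _ hw 1 zero_le_one fun i => (h3 i x hx).1, ?_⟩
    rw [← Finset.sum_sub_distrib]
    simp_rw [← mul_sub]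
    exact abs_lin w _ hw _ (by positivity) fun i => (h3 i x hx).2

lemma GoodF.act {d r k : ℕ} {δ : ℝ} {σ : ℝ → ℝ} (hl : LipschitzOnWith 1 σ (Set.Icc (-1) 1))
    (hb : ∀ x ∈ Set.Icc (-1 : ℝ) 1, |σ x| ≤ 1) (p : Polynomial ℝ) (hp : p.natDegree = r)
    (hp1 : ∀ x ∈ Set.Icc (-1 : ℝ) 1, |p.eval x - σ x| ≤ δ)
    (hp2 : ∀ x ∈ Set.Icc (-1 : ℝ) 1, p.eval x ∈ Set.Icc (0 : ℝ) 1)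
    {u : (Fin d → ℝ) → ℝ} (hu : GoodF d r δ k u) :
    GoodF d r δ (k + 1) (fun x => σ (u x)) := by
  obtain ⟨h1, h2, g, hg, h3⟩ := hu
  refine ⟨?_, ?_, fun x => p.eval (g x), ?_, ?_⟩
  · exact hl.continuousOn.comp h1 fun x hx => abs_le.1 (h2 x hx)
  · exact fun x hx => hb _ (abs_le.1 (h2 x hx))
  · have := polyV_eval hg p
    rwa [hp, ← pow_succ'] at this
  · intro x hx
    have hgx := abs_le.1 (h3 x hx).1
    have hux := abs_le.1 (h2 x hx)
    obtain ⟨a1, a2⟩ := hp2 (g x) hgx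
    refine ⟨abs_le.2 ⟨by linarith, a2⟩, ?_⟩
    have h4 := hp1 (g x) hgx
    have h5 := hl.dist_le_mul (g x) hgx (u x) hux
    simp only [Real.dist_eq, NNReal.coe_one, one_mul] at h5
    have h6 := abs_sub_le (p.eval (g x)) (σ (g x)) (σ (u x))
    push_cast
    linarith [(h3 x hx).2]

lemma GoodF.iter {d r k m : ℕ} {δ : ℝ} (hδ : 0 ≤ δ) {σ : ℝ → ℝ}
    (hact : ∀ k (u : (Fin d → ℝ) → ℝ), GoodF d r δ k u → GoodF d r δ (k + 1) (fun x => σ (u x)))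
    (n : ℕ) (Ws : Fin n → Matrix (Fin m) (Fin m) ℝ) (hWs : ∀ p j, ∑ i, |Ws p j i| ≤ 1)
    (v : (Fin d → ℝ) → Fin m → ℝ) (hv : ∀ j, GoodF d r δ k (fun x => v x j)) (j : Fin m) :
    GoodF d r δ (k + n) (fun x => iterLayers σ n Ws (v x) j) := by
  induction n generalizing j with
  | zero => exact hv j
  | succ n ih =>
    exact hact _ _ (GoodF.lin hδ _ (fun i => ih (fun i => Ws i.castSucc)
      (fun p j => hWs _ j) i) _ (hWs _ j))

lemma GoodF.nn {d r m L : ℕ} (hL : 1 ≤ L) {δ : ℝ} (hδ : 0 ≤ δ) {σ : ℝ → ℝ}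
    (hact : ∀ k (u : (Fin d → ℝ) → ℝ), GoodF d r δ k u → GoodF d r δ (k + 1) (fun x => σ (u x)))
    (a : Fin m → ℝ) (W1 : Matrix (Fin m) (Fin d) ℝ)
    (Ws : Fin (L - 1) → Matrix (Fin m) (Fin m) ℝ)
    (ha : ∑ j, |a j| ≤ 1)
    (hW1 : ∀ j, ∑ i, |W1 j i| ≤ 1)
    (hWs : ∀ p j, ∑ i, |Ws p j i| ≤ 1) :
    GoodF d r δ L (nnFun σ a W1 Ws) := by
  have h0 : ∀ i, GoodF d r δ 0 (fun x : Fin d → ℝ => x i) := fun i =>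
    ⟨(continuous_apply i).continuousOn, fun x hx => abs_le.2 (hx i), fun x => x i,
      by simpa using polyV_coord i, fun x hx => ⟨abs_le.2 (hx i), by simp⟩⟩
  have h1 : ∀ j, GoodF d r δ (0 + 1) (fun x => applyLayer σ W1 x j) := fun j =>
    hact _ _ (GoodF.lin hδ _ h0 _ (hW1 j))
  have h2 := GoodF.lin hδ _ (GoodF.iter hδ hact (L - 1) Ws hWs (applyLayer σ W1) h1) a ha
  rw [show 0 + 1 + (L - 1) = L by omega] at h2
  exact h2

/-- functions agreeing on `S^d` with a combination of the monomials in `C` -/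
def repV (d : ℕ) (S : Set ℝ) (C : Finset (Fin d → ℕ)) : Submodule ℝ ((Fin d → ℝ) → ℝ) where
  carrier := {f | ∃ c : (Fin d → ℕ) → ℝ, ∀ x : Fin d → ℝ, (∀ i, x i ∈ S) →
    f x = ∑ β ∈ C, c β * monom β x}
  zero_mem' := ⟨0, by simp⟩
  add_mem' := by
    rintro f g ⟨c, hc⟩ ⟨e, he⟩
    refine ⟨c + e, fun x hx => ?_⟩
    simp [hc x hx, he x hx, add_mul, Finset.sum_add_distrib]
  smul_mem' := by
    rintro t f ⟨c, hc⟩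
    refine ⟨t • c, fun x hx => ?_⟩
    simp [hc x hx, Finset.mul_sum, mul_assoc]

lemma repV_monom {d : ℕ} {S : Set ℝ} {C : Finset (Fin d → ℕ)} {β : Fin d → ℕ} (h : β ∈ C) :
    monom β ∈ repV d S C :=
  ⟨fun γ => if γ = β then 1 else 0, fun x _ => by simp [h]⟩

lemma reduce_pow {S : Set ℝ} (hS : S.Finite) (k : ℕ) :
    ∃ p : Polynomial ℝ, p.natDegree ≤ min k (S.ncard - 1) ∧ ∀ x ∈ S, x ^ k = p.eval x := by
  rcases Nat.lt_or_ge k S.ncard with h | h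
  · exact ⟨X ^ k, by simp; omega, by simp⟩
  · let Q : Polynomial ℝ := ∏ s ∈ hS.toFinset, (X - C s)
    have hQ : Q.Monic := monic_prod_of_monic _ _ fun s _ => monic_X_sub_C s
    have hd : Q.natDegree = S.ncard := by
      rw [natDegree_prod_of_monic _ _ fun s _ => monic_X_sub_C s]
      simp [Set.ncard_eq_toFinset_card S hS]
    have hlt : (X ^ k %ₘ Q).natDegree ≤ S.ncard - 1 := by
      by_cases h1 : Q = 1
      · simp [h1]
      · have := natDegree_modByMonic_lt (X ^ k) hQ h1
        omega
    refine ⟨X ^ k %ₘ Q, by omega, fun x hx => ?_⟩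
    have h0 : Q.eval x = 0 := by
      rw [eval_prod]
      exact Finset.prod_eq_zero (hS.mem_toFinset.2 hx) (by simp)
    have := congrArg (eval x) (modByMonic_add_div (X ^ k) Q)
    simp [h0] at this
    exact this.symm

lemma polyV_le_repV (P : Measure ℝ) (d M : ℕ) :
    polyV d M ≤ repV d (measSupport P) (multSet P d M) := by
  refine Submodule.span_le.2 ?_
  rintro _ ⟨α, hα, rfl⟩
  have hα : ∑ i, α i ≤ M := hα
  have hαi : ∀ i, α i ≤ M := fun i =>
    (Finset.single_le_sum (f := α) (fun _ _ => Nat.zero_le _) (Finset.mem_univ i)).trans hα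
  by_cases hS : (measSupport P).Finite
  · choose p hp hpe using reduce_pow hS
    have key : (fun x : Fin d → ℝ => ∏ i, (p (α i)).eval (x i)) ∈
        repV d (measSupport P) (multSet P d M) := by
      have e : (fun x : Fin d → ℝ => ∏ i, (p (α i)).eval (x i)) =
          ∑ β ∈ Fintype.piFinset (fun i => Finset.range ((p (α i)).natDegree + 1)),
            (∏ i, (p (α i)).coeff (β i)) • monom β := by
        funext x
        simp only [Polynomial.eval_eq_sum_range, Finset.prod_univ_sum, Finset.sum_apply,
          Pi.smul_apply, smul_eq_mul, monom, Finset.prod_mul_distrib]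
      rw [e]
      refine Submodule.sum_mem _ fun β hβ => Submodule.smul_mem _ _ (repV_monom ?_)
      simp only [Fintype.mem_piFinset, Finset.mem_range] at hβ
      have hb : ∀ i, β i ≤ α i ∧ β i ≤ (measSupport P).ncard - 1 := fun i => by
        have := hβ i
        have := hp (α i)
        omega
      simp only [multSet, omegaP, capM, hS, if_true, Finset.mem_filter, Fintype.mem_piFinset,
        Finset.mem_range]
      refine ⟨fun i => ?_, le_min ?_ ?_⟩
      · have := hb i
        have := hαi i
        omega
      · exact (Finset.sum_le_sum fun i _ => (hb i).1).trans hα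
      · refine (Finset.sum_le_sum fun i _ => (hb i).2).trans ?_
        simp
    obtain ⟨c, hc⟩ := key
    refine ⟨c, fun x hx => ?_⟩
    rw [← hc x hx]
    exact Finset.prod_congr rfl fun i _ => hpe _ _ (hx i)
  · refine repV_monom ?_
    simp only [multSet, omegaP, capM, hS, if_false, Finset.mem_filter, Fintype.mem_piFinset,
      Finset.mem_range]
    exact ⟨fun i => Nat.lt_succ_of_le (hαi i), hα⟩

lemma ae_measSupport (P : Measure ℝ) : ∀ᵐ x ∂P, x ∈ measSupport P := by
  have : measSupport P = P.support := by
    ext x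
    rw [Measure.mem_support_iff_forall]
    simp [measSupport, pos_iff_ne_zero]
  rw [this]
  exact Measure.support_mem_ae

lemma ae_piP (P : Measure ℝ) [IsProbabilityMeasure P] (d : ℕ) {A : ℝ → Prop}
    (h : ∀ᵐ x ∂P, A x) : ∀ᵐ x ∂(piP P d), ∀ i, A (x i) := by
  rw [ae_all_iff]
  intro i
  exact (measurePreserving_eval (fun _ : Fin d => P) i).quasiMeasurePreserving.ae h

/-- Existence of an orthogonal, accurate polynomial approximant of a
network: for an admissible activation network with unit `ℓ1`-bounded weights and
`M = φ_σ(√(ε/L²))^L`, there is a polynomial supported on the `(d,M)`-multiplicities set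
whose error is orthogonal to all those monomials and has mean square at most `ε`. -/
theorem network_orthogonal_polynomial_approximation
    (P : Measure ℝ) (hP : AdmissibleDist P)
    (σ : ℝ → ℝ) (hσ : AdmissibleActivation σ)
    (d m L : ℕ) (hL : 1 ≤ L)
    (a : Fin m → ℝ) (W1 : Matrix (Fin m) (Fin d) ℝ)
    (Ws : Fin (L - 1) → Matrix (Fin m) (Fin m) ℝ)
    (ha : ∑ j, |a j| ≤ 1)
    (hW1 : ∀ j, ∑ i, |W1 j i| ≤ 1)
    (hWs : ∀ p j, ∑ i, |Ws p j i| ≤ 1)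
    (ε : ℝ) (hε : 0 < ε)
    (M : ℕ) (hM : M = approxOrder σ (Real.sqrt (ε / (L : ℝ) ^ 2)) ^ L) :
    ∃ q : (Fin d → ℕ) → ℝ,
      (∀ α ∈ multSet P d M,
        ∫ x, monom α x * (nnFun σ a W1 Ws x
            - ∑ β ∈ multSet P d M, q β * monom β x) ∂(piP P d) = 0) ∧
      ∫ x, (nnFun σ a W1 Ws x - ∑ β ∈ multSet P d M, q β * monom β x) ^ 2 ∂(piP P d)
        ≤ ε := by
  obtain ⟨hP1, hP2, -⟩ := hP
  obtain ⟨-, hσ2, hσ3, hσ4⟩ := hσ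
  haveI : IsProbabilityMeasure (piP P d) := by unfold piP; infer_instance
  have hL0 : (0 : ℝ) < L := by exact_mod_cast hL
  have hδ : 0 < Real.sqrt (ε / (L : ℝ) ^ 2) := Real.sqrt_pos.2 (by positivity)
  have hδL : (L : ℝ) * Real.sqrt (ε / (L : ℝ) ^ 2) = Real.sqrt ε := by
    rw [Real.sqrt_div hε.le, Real.sqrt_sq hL0.le]
    field_simp
  obtain ⟨p, hp, hp1, hp2⟩ := hσ2 _ hδ
  obtain ⟨hc, hb, g, hg, hgu⟩ := GoodF.nn (d := d) hL hδ.le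
    (fun k u hu => GoodF.act hσ3 hσ4 p hp hp1 hp2 hu) a W1 Ws ha hW1 hWs
  rw [← hM] at hg
  obtain ⟨c, hcg⟩ := polyV_le_repV P d M hg
  have hcube : ∀ᵐ x ∂(piP P d), x ∈ cube d := by
    refine ae_piP P d (A := fun t => t ∈ Set.Icc (-1 : ℝ) 1) ?_
    exact (prob_compl_eq_zero_iff measurableSet_Icc).2 hP2
  have hsupp := ae_piP P d (ae_measSupport P)
  have hcm : MeasurableSet (cube d) := by
    have : cube d = Set.pi Set.univ fun _ => Set.Icc (-1 : ℝ) 1 := by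
      ext x; simp only [cube, Set.mem_ofPred_eq, Set.mem_pi, Set.mem_univ, true_imp_iff]
    rw [this]
    exact MeasurableSet.univ_pi fun _ => measurableSet_Icc
  have hmem : ∀ u : (Fin d → ℝ) → ℝ, ContinuousOn u (cube d) → (∀ x ∈ cube d, |u x| ≤ 1) →
      MemLp u 2 (piP P d) := by
    intro u h1 h2
    refine MemLp.of_bound ?_ 1 ?_
    · have := h1.aestronglyMeasurable (μ := piP P d) hcm
      rwa [Measure.restrict_eq_self_of_ae_mem hcube] at this
    · filter_upwards [hcube] with x hx using h2 x hx
  have hmon : ∀ β : Fin d → ℕ, MemLp (monom β) 2 (piP P d) := by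
    intro β
    refine hmem _ ?_ ?_
    · unfold monom
      fun_prop
    · intro x hx
      unfold monom
      rw [Finset.abs_prod]
      refine Finset.prod_le_one (fun i _ => abs_nonneg _) fun i _ => ?_
      rw [abs_pow]
      exact pow_le_one₀ (abs_nonneg _) (abs_le.2 (hx i))
  obtain ⟨q, hq1, hq2⟩ := l2_proj (piP P d) (multSet P d M) monom hmon _ (hmem _ hc hb)
  refine ⟨q, hq1, (hq2 c).trans ?_⟩
  calc ∫ x, (nnFun σ a W1 Ws x - ∑ β ∈ multSet P d M, c β * monom β x) ^ 2 ∂(piP P d)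
      ≤ ∫ _, ε ∂(piP P d) := by
        refine integral_mono_of_nonneg (Filter.Eventually.of_forall fun x => sq_nonneg _)
          (integrable_const _) ?_
        filter_upwards [hcube, hsupp] with x hx hs
        have h := (hgu x hx).2
        rw [hcg x hs, hδL, abs_sub_comm] at h
        calc _ = |nnFun σ a W1 Ws x - ∑ β ∈ multSet P d M, c β * monom β x| ^ 2 := (sq_abs _).symm
          _ ≤ Real.sqrt ε ^ 2 := by gcongr
          _ = ε := Real.sq_sqrt hε.le
    _ = ε := by simp

end
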